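/- Suppose a design d and a real number x satisfy: (i) ∑_{s∈Q} p_s [Ĉ_{s11} + x Ĉ_{s12}] = (y*/(t−1)) B_t; (ii) ∑_{s∈Q} p_s [Ĉ_{s21} + x Ĉ_{s22}] = 0; (iii) ∑_{s∈Q} p_s B̃ (T_s + x F_s) B_t = 0; (iv) ∑_{s∈Q} p_s = 1; (v) p_s = 0 for every s ∉ Q. Then for every λ0 ∈ ℝ and every exchangeable prior g, the design d is E_{g,λ0}-optimal. -/

import Mathlib

open Matrix MeasureTheory
open scoped Classical

noncomputable section

/-- A treatment sequence: assigns a treatment in `Fin t` to each period in `Fin p`. -/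
abbrev TrtSeq (p t : ℕ) := Fin p → Fin t

/-- Treatment/period incidence matrix `T_s`. -/
def Tmat {p t : ℕ} (s : TrtSeq p t) : Matrix (Fin p) (Fin t) ℝ :=
  Matrix.of fun k i => if s k = i then 1 else 0

/-- Carryover incidence matrix `F_s`: first row zero, row `k` records the treatment
in period `k-1`. -/
def Fmat {p t : ℕ} (s : TrtSeq p t) : Matrix (Fin p) (Fin t) ℝ :=
  Matrix.of fun k i =>
    if (k : ℕ) = 0 then 0
    else if s ⟨(k : ℕ) - 1, Nat.lt_of_le_of_lt (Nat.sub_le _ _) k.isLt⟩ = i then 1 else 0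

/-- The all-ones `m × m` matrix `J_m`. -/
def Jmat (m : ℕ) : Matrix (Fin m) (Fin m) ℝ := Matrix.of fun _ _ => 1

/-- `B_t = I_t - J_t / t`. -/
def Bmat (t : ℕ) : Matrix (Fin t) (Fin t) ℝ := 1 - ((t : ℝ))⁻¹ • Jmat t

/-- `B̃ = Σ⁻¹ - Σ⁻¹ J_p Σ⁻¹ / (1_p' Σ⁻¹ 1_p)`. -/
def Btil {p : ℕ} (S : Matrix (Fin p) (Fin p) ℝ) : Matrix (Fin p) (Fin p) ℝ :=
  S⁻¹ - (((fun _ => (1 : ℝ)) : Fin p → ℝ) ⬝ᵥ (S⁻¹ *ᵥ fun _ => (1 : ℝ)))⁻¹ •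
    (S⁻¹ * Jmat p * S⁻¹)

/-- `G_1(s) = T_s`, `G_2(s) = F_s`. -/
def Gmat {p t : ℕ} (i : Fin 2) (s : TrtSeq p t) : Matrix (Fin p) (Fin t) ℝ :=
  if i = 0 then Tmat s else Fmat s

/-- An approximate design: nonnegative weights summing to one. -/
def IsDesign {p t : ℕ} (w : TrtSeq p t → ℝ) : Prop :=
  (∀ s, 0 ≤ w s) ∧ ∑ s : TrtSeq p t, w s = 1

/-- `Ĉ_{sij} = B_t G_i(s)' B̃ G_j(s) B_t`. -/
def Chat {p t : ℕ} (S : Matrix (Fin p) (Fin p) ℝ) (s : TrtSeq p t) (i j : Fin 2) :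
    Matrix (Fin t) (Fin t) ℝ :=
  Bmat t * (Gmat i s)ᵀ * Btil S * Gmat j s * Bmat t

/-- `c_{sij} = tr Ĉ_{sij}`. -/
def cseq {p t : ℕ} (S : Matrix (Fin p) (Fin p) ℝ) (s : TrtSeq p t) (i j : Fin 2) : ℝ :=
  (Chat S s i j).trace

/-- `Ĉ_{dij} = n ∑_s p_s Ĉ_{sij}`. -/
def ChatD {p t : ℕ} (n : ℕ) (S : Matrix (Fin p) (Fin p) ℝ) (w : TrtSeq p t → ℝ)
    (i j : Fin 2) : Matrix (Fin t) (Fin t) ℝ :=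
  (n : ℝ) • ∑ s : TrtSeq p t, w s • Chat S s i j

/-- `C_{dij} = Ĉ_{dij} - n (∑_s p_s G_i(s) B_t)' B̃ (∑_s p_s G_j(s) B_t)`. -/
def CD {p t : ℕ} (n : ℕ) (S : Matrix (Fin p) (Fin p) ℝ) (w : TrtSeq p t → ℝ)
    (i j : Fin 2) : Matrix (Fin t) (Fin t) ℝ :=
  ChatD n S w i j -
    (n : ℝ) • ((∑ s : TrtSeq p t, w s • (Gmat i s * Bmat t))ᵀ * Btil S *
      (∑ s : TrtSeq p t, w s • (Gmat j s * Bmat t)))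

/-- `c_{dij} = tr Ĉ_{dij} = n ∑_s p_s c_{sij}`. -/
def cD {p t : ℕ} (n : ℕ) (S : Matrix (Fin p) (Fin p) ℝ) (w : TrtSeq p t → ℝ)
    (i j : Fin 2) : ℝ :=
  (ChatD n S w i j).trace

/-- Fisher information matrix `C_{d,τ0,λ0}` for the direct treatment effects under the
proportional model. -/
def CInfo {p t : ℕ} (n : ℕ) (S : Matrix (Fin p) (Fin p) ℝ) (w : TrtSeq p t → ℝ)
    (τ0 : Fin t → ℝ) (l0 : ℝ) : Matrix (Fin t) (Fin t) ℝ :=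
  CD n S w 0 0 + l0 • (CD n S w 0 1 + CD n S w 1 0) + (l0 ^ 2) • CD n S w 1 1 -
    (τ0 ⬝ᵥ (CD n S w 1 1 *ᵥ τ0))⁻¹ •
      ((CD n S w 0 1 + l0 • CD n S w 1 1) * vecMulVec τ0 τ0 *
        (CD n S w 1 0 + l0 • CD n S w 1 1))

/-- Permutation matrix `S_σ` with `(S_σ)_{j,i} = 1` iff `i = σ j`. -/
def Smat {t : ℕ} (σ : Equiv.Perm (Fin t)) : Matrix (Fin t) (Fin t) ℝ :=
  Matrix.of fun j i => if i = σ j then 1 else 0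

/-- The relabelled sequence `σ ∘ s`. -/
def permSeq {p t : ℕ} (σ : Equiv.Perm (Fin t)) (s : TrtSeq p t) : TrtSeq p t := fun k => σ (s k)

/-- The design `σ d`, with weights `(σd)_s = p_{σ⁻¹ ∘ s}`. -/
def permDesign {p t : ℕ} (σ : Equiv.Perm (Fin t)) (w : TrtSeq p t → ℝ) : TrtSeq p t → ℝ :=
  fun s => w (permSeq σ⁻¹ s)

/-- A design is symmetric if its weights are invariant under treatment relabelling. -/
def IsSymmetricDesign {p t : ℕ} (w : TrtSeq p t → ℝ) : Prop :=
  ∀ (σ : Equiv.Perm (Fin t)) (s : TrtSeq p t), w (permSeq σ s) = w s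

/-- The symmetrized design `d*` with weights `p*_s = (1/t!) ∑_σ p_{σ⁻¹ ∘ s}`. -/
def symmetrize {p t : ℕ} (w : TrtSeq p t → ℝ) : TrtSeq p t → ℝ :=
  fun s => ((Nat.factorial t : ℝ))⁻¹ * ∑ σ : Equiv.Perm (Fin t), permDesign σ w s

/-- `q_s(x) = c_{s11} + 2 c_{s12} x + c_{s22} x²`. -/
def qSeq {p t : ℕ} (S : Matrix (Fin p) (Fin p) ℝ) (s : TrtSeq p t) (x : ℝ) : ℝ :=
  cseq S s 0 0 + 2 * cseq S s 0 1 * x + cseq S s 1 1 * x ^ 2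

/-- `q(x) = max_{s ∈ S} q_s(x)`. -/
def qMax (p t : ℕ) (S : Matrix (Fin p) (Fin p) ℝ) (x : ℝ) : ℝ :=
  sSup (Set.range fun s : TrtSeq p t => qSeq S s x)

/-- `y* = inf_x q(x)`. -/
def yStar (p t : ℕ) (S : Matrix (Fin p) (Fin p) ℝ) : ℝ := ⨅ x : ℝ, qMax p t S x

/-- `q_d(x) = ∑_s p_s q_s(x)`. -/
def qD {p t : ℕ} (S : Matrix (Fin p) (Fin p) ℝ) (w : TrtSeq p t → ℝ) (x : ℝ) : ℝ :=
  ∑ s : TrtSeq p t, w s * qSeq S s x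

/-- `x_d = -c_{d12}/c_{d22}`. -/
def xD {p t : ℕ} (n : ℕ) (S : Matrix (Fin p) (Fin p) ℝ) (w : TrtSeq p t → ℝ) : ℝ :=
  -(cD n S w 0 1) / cD n S w 1 1

/-- An exchangeable prior: a probability measure on `{τ : 1'τ = 0, τ ≠ 0}` that is
invariant under all coordinate permutations of `ℝ^t`. -/
def IsExchangeablePrior {t : ℕ} (g : Measure (Fin t → ℝ)) : Prop :=
  IsProbabilityMeasure g ∧
    g {τ : Fin t → ℝ | ¬((∑ i, τ i) = 0 ∧ τ ≠ 0)} = 0 ∧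
    ∀ σ : Equiv.Perm (Fin t), Measure.map (fun τ i => τ (σ i)) g = g

/-- `m_d(τ0) = min {ℓ' C_{d,τ0,λ0} ℓ : 1'ℓ = 0, ℓ'ℓ = 1}`. -/
def mD {p t : ℕ} (n : ℕ) (S : Matrix (Fin p) (Fin p) ℝ) (w : TrtSeq p t → ℝ) (l0 : ℝ)
    (τ0 : Fin t → ℝ) : ℝ :=
  sInf {v : ℝ | ∃ l : Fin t → ℝ, (∑ i, l i) = 0 ∧ l ⬝ᵥ l = 1 ∧
    v = l ⬝ᵥ (CInfo n S w τ0 l0 *ᵥ l)}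

/-- The E-criterion value `E_{g,λ0}(d) = ∫ m_d(τ0) g(dτ0)`. -/
def Ecrit {p t : ℕ} (n : ℕ) (S : Matrix (Fin p) (Fin p) ℝ) (g : Measure (Fin t → ℝ))
    (l0 : ℝ) (w : TrtSeq p t → ℝ) : ℝ :=
  ∫ τ0, mD n S w l0 τ0 ∂g

/-- Competing designs for E-optimality: designs with a.e. positive `τ0' C_{d22} τ0`
and `g`-integrable `m_d`. -/
def EAdmissible {p t : ℕ} (n : ℕ) (S : Matrix (Fin p) (Fin p) ℝ) (g : Measure (Fin t → ℝ))
    (l0 : ℝ) (w : TrtSeq p t → ℝ) : Prop :=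
  IsDesign w ∧ (∀ᵐ τ0 ∂g, 0 < τ0 ⬝ᵥ (CD n S w 1 1 *ᵥ τ0)) ∧
    Integrable (mD n S w l0) g

/-- `d` is `E_{g,λ0}`-optimal. -/
def EOptimal {p t : ℕ} (n : ℕ) (S : Matrix (Fin p) (Fin p) ℝ) (g : Measure (Fin t → ℝ))
    (l0 : ℝ) (w : TrtSeq p t → ℝ) : Prop :=
  ∀ w' : TrtSeq p t → ℝ, EAdmissible n S g l0 w' → Ecrit n S g l0 w' ≤ Ecrit n S g l0 w

/-- A pseudo symmetric design: treatments equireplicated in each period,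
and all `C_{dij}` completely symmetric. -/
def IsPseudoSymmetric {p t : ℕ} (n : ℕ) (S : Matrix (Fin p) (Fin p) ℝ)
    (w : TrtSeq p t → ℝ) : Prop :=
  (∀ (k : Fin p) (i : Fin t),
    (∑ s ∈ Finset.univ.filter fun s : TrtSeq p t => s k = i, w s) = 1 / (t : ℝ)) ∧
  ∀ i j : Fin 2, ∃ a b : ℝ, CD n S w i j = a • (1 : Matrix (Fin t) (Fin t) ℝ) + b • Jmat t

/-- Eigenvalues of a (Hermitian) matrix sorted increasingly with multiplicity. -/
def sortedEigs {t : ℕ} (C : Matrix (Fin t) (Fin t) ℝ) : Fin t → ℝ :=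
  if h : C.IsHermitian then (fun i => h.eigenvalues (Tuple.sort h.eigenvalues i))
  else fun _ => 0

/-- `Φ_D(C) = (∏_{i=1}^{t-1} a_i)^{1/(t-1)}` (eigenvalues sorted increasingly). -/
def PhiD {t : ℕ} (C : Matrix (Fin t) (Fin t) ℝ) : ℝ :=
  (∏ i ∈ Finset.univ.filter fun i : Fin t => (i : ℕ) ≠ 0, sortedEigs C i) ^ (((t : ℝ) - 1)⁻¹)

/-- `Φ_A(C) = (t-1)(∑_{i=1}^{t-1} a_i⁻¹)⁻¹` if `a_1 > 0`, else `0`. -/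
def PhiA {t : ℕ} (C : Matrix (Fin t) (Fin t) ℝ) : ℝ :=
  if ∀ i : Fin t, (i : ℕ) ≠ 0 → 0 < sortedEigs C i then
    ((t : ℝ) - 1) *
      (∑ i ∈ Finset.univ.filter fun i : Fin t => (i : ℕ) ≠ 0, (sortedEigs C i)⁻¹)⁻¹
  else 0

/-- `Φ_T(C) = tr(C)/(t-1)`. -/
def PhiT {t : ℕ} (C : Matrix (Fin t) (Fin t) ℝ) : ℝ := C.trace / ((t : ℝ) - 1)

/-- The criterion value `∫ Φ(C_{d,τ0,λ0}) g(dτ0)`. -/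
def PhiCrit {p t : ℕ} (n : ℕ) (S : Matrix (Fin p) (Fin p) ℝ)
    (Phi : Matrix (Fin t) (Fin t) ℝ → ℝ) (g : Measure (Fin t → ℝ)) (l0 : ℝ)
    (w : TrtSeq p t → ℝ) : ℝ :=
  ∫ τ0, Phi (CInfo n S w τ0 l0) ∂g

/-- Competing designs for a `Φ`-criterion. -/
def PhiAdmissible {p t : ℕ} (n : ℕ) (S : Matrix (Fin p) (Fin p) ℝ)
    (Phi : Matrix (Fin t) (Fin t) ℝ → ℝ) (g : Measure (Fin t → ℝ)) (l0 : ℝ)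
    (w : TrtSeq p t → ℝ) : Prop :=
  IsDesign w ∧ (∀ᵐ τ0 ∂g, 0 < τ0 ⬝ᵥ (CD n S w 1 1 *ᵥ τ0)) ∧
    Integrable (fun τ0 => Phi (CInfo n S w τ0 l0)) g

/-- `d` is `Φ_{g,λ0}`-optimal. -/
def PhiOptimal {p t : ℕ} (n : ℕ) (S : Matrix (Fin p) (Fin p) ℝ)
    (Phi : Matrix (Fin t) (Fin t) ℝ → ℝ) (g : Measure (Fin t → ℝ)) (l0 : ℝ)
    (w : TrtSeq p t → ℝ) : Prop :=
  ∀ w' : TrtSeq p t → ℝ, PhiAdmissible n S Phi g l0 w' →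
    PhiCrit n S Phi g l0 w' ≤ PhiCrit n S Phi g l0 w

/-- `H_1(s) = F_s`, `H_2(s) = T_s + λ0 F_s` (for estimating `λ`). -/
def Hmat {p t : ℕ} (l0 : ℝ) (i : Fin 2) (s : TrtSeq p t) : Matrix (Fin p) (Fin t) ℝ :=
  if i = 0 then Fmat s else Tmat s + l0 • Fmat s

/-- `Â_{sij} = B_t H_i(s)' B̃ H_j(s) B_t`. -/
def Ahat {p t : ℕ} (S : Matrix (Fin p) (Fin p) ℝ) (l0 : ℝ) (s : TrtSeq p t) (i j : Fin 2) :
    Matrix (Fin t) (Fin t) ℝ :=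
  Bmat t * (Hmat l0 i s)ᵀ * Btil S * Hmat l0 j s * Bmat t

/-- `h_{sij} = tr Â_{sij}`. -/
def hseq {p t : ℕ} (S : Matrix (Fin p) (Fin p) ℝ) (l0 : ℝ) (s : TrtSeq p t) (i j : Fin 2) : ℝ :=
  (Ahat S l0 s i j).trace

/-- `Â_{dij} = n ∑_s p_s Â_{sij}`. -/
def AhatD {p t : ℕ} (n : ℕ) (S : Matrix (Fin p) (Fin p) ℝ) (l0 : ℝ) (w : TrtSeq p t → ℝ)
    (i j : Fin 2) : Matrix (Fin t) (Fin t) ℝ :=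
  (n : ℝ) • ∑ s : TrtSeq p t, w s • Ahat S l0 s i j

/-- `A_{dij} = Â_{dij} - n (∑_s p_s H_i(s) B_t)' B̃ (∑_s p_s H_j(s) B_t)`. -/
def AD {p t : ℕ} (n : ℕ) (S : Matrix (Fin p) (Fin p) ℝ) (l0 : ℝ) (w : TrtSeq p t → ℝ)
    (i j : Fin 2) : Matrix (Fin t) (Fin t) ℝ :=
  AhatD n S l0 w i j -
    (n : ℝ) • ((∑ s : TrtSeq p t, w s • (Hmat l0 i s * Bmat t))ᵀ * Btil S *
      (∑ s : TrtSeq p t, w s • (Hmat l0 j s * Bmat t)))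

/-- `G` is a generalized inverse of `A`. -/
def IsGInv {t : ℕ} (A G : Matrix (Fin t) (Fin t) ℝ) : Prop := A * G * A = A

/-- `A_d(G) = A_{d11} - A_{d12} G A_{d21}` with `A_{d21} = A_{d12}'`. -/
def ADfun {p t : ℕ} (n : ℕ) (S : Matrix (Fin p) (Fin p) ℝ) (l0 : ℝ) (w : TrtSeq p t → ℝ)
    (G : Matrix (Fin t) (Fin t) ℝ) : Matrix (Fin t) (Fin t) ℝ :=
  AD n S l0 w 0 0 - AD n S l0 w 0 1 * G * (AD n S l0 w 0 1)ᵀ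

/-- `r_s(x) = h_{s11} + 2 h_{s12} x + h_{s22} x²`. -/
def rSeq {p t : ℕ} (S : Matrix (Fin p) (Fin p) ℝ) (l0 : ℝ) (s : TrtSeq p t) (x : ℝ) : ℝ :=
  hseq S l0 s 0 0 + 2 * hseq S l0 s 0 1 * x + hseq S l0 s 1 1 * x ^ 2

/-- `r(x) = max_s r_s(x)`. -/
def rMax (p t : ℕ) (S : Matrix (Fin p) (Fin p) ℝ) (l0 : ℝ) (x : ℝ) : ℝ :=
  sSup (Set.range fun s : TrtSeq p t => rSeq S l0 s x)

/-- `y_0 = inf_x r(x)`. -/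
def yZero (p t : ℕ) (S : Matrix (Fin p) (Fin p) ℝ) (l0 : ℝ) : ℝ := ⨅ x : ℝ, rMax p t S l0 x

lemma aux_cs {m : ℕ} (A : Matrix (Fin m) (Fin m) ℝ) (hs : Aᵀ = A)
    (hA : ∀ v, 0 ≤ v ⬝ᵥ (A *ᵥ v)) (u v : Fin m → ℝ) :
    0 ≤ v ⬝ᵥ (A *ᵥ v) - (u ⬝ᵥ (A *ᵥ u))⁻¹ * (u ⬝ᵥ (A *ᵥ v)) ^ 2 := by
  have hvu : v ⬝ᵥ (A *ᵥ u) = u ⬝ᵥ (A *ᵥ v) := by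
    rw [dotProduct_mulVec, ← mulVec_transpose, hs, dotProduct_comm]
  by_cases hc : u ⬝ᵥ (A *ᵥ u) = 0
  · rw [hc]; simpa using hA v
  · have h := hA (v - ((u ⬝ᵥ (A *ᵥ v)) / (u ⬝ᵥ (A *ᵥ u))) • u)
    simp only [mulVec_sub, mulVec_smul, dotProduct_sub, sub_dotProduct, dotProduct_smul,
      smul_dotProduct, smul_eq_mul, hvu] at h
    convert h using 1
    field_simp
    ring

lemma Bmat_transpose (t : ℕ) : (Bmat t)ᵀ = Bmat t := by
  ext i j
  simp [Bmat, Jmat, Matrix.one_apply, eq_comm]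

lemma Jmat_transpose (t : ℕ) : (Jmat t)ᵀ = Jmat t := by
  ext i j
  simp [Jmat]

lemma Bmat_mulVec {t : ℕ} (l : Fin t → ℝ) (h : ∑ i, l i = 0) : Bmat t *ᵥ l = l := by
  have : Jmat t *ᵥ l = 0 := by
    ext i
    simp [Jmat, mulVec, dotProduct, h]
  simp [Bmat, sub_mulVec, smul_mulVec, this]

lemma Bmat_mulVec_one {t : ℕ} (ht : 0 < t) : Bmat t *ᵥ (fun _ => (1 : ℝ)) = 0 := by
  ext i
  have : (t : ℝ) ≠ 0 := by positivity
  simp [Bmat, Jmat, mulVec, dotProduct, Matrix.one_apply, this]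

lemma Sinv_transpose {p : ℕ} {S : Matrix (Fin p) (Fin p) ℝ} (hS : S.PosDef) :
    (S⁻¹)ᵀ = S⁻¹ := by
  have := hS.inv.isHermitian
  simpa [Matrix.IsHermitian] using this

lemma Btil_transpose {p : ℕ} {S : Matrix (Fin p) (Fin p) ℝ} (hS : S.PosDef) :
    (Btil S)ᵀ = Btil S := by
  simp only [Btil, transpose_sub, transpose_smul, transpose_mul, Sinv_transpose hS,
    Jmat_transpose, Matrix.mul_assoc]

lemma Jmat_eq (p : ℕ) : Jmat p = vecMulVec (fun _ => (1 : ℝ)) (fun _ => (1 : ℝ)) := by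
  ext i j
  simp [Jmat, vecMulVec]

lemma Btil_nonneg {p : ℕ} {S : Matrix (Fin p) (Fin p) ℝ} (hS : S.PosDef) (v : Fin p → ℝ) :
    0 ≤ v ⬝ᵥ (Btil S *ᵥ v) := by
  have hn : ∀ v, 0 ≤ v ⬝ᵥ (S⁻¹ *ᵥ v) := fun v => by
    simpa using hS.inv.posSemidef.dotProduct_mulVec_nonneg v
  have h := aux_cs S⁻¹ (Sinv_transpose hS) hn (fun _ => 1) v
  have hvu : v ⬝ᵥ (S⁻¹ *ᵥ (fun _ => (1 : ℝ))) = (fun _ => (1 : ℝ)) ⬝ᵥ (S⁻¹ *ᵥ v) := by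
    rw [dotProduct_mulVec, ← mulVec_transpose, Sinv_transpose hS, dotProduct_comm]
  convert h using 1
  rw [Btil, sub_mulVec, dotProduct_sub, smul_mulVec, dotProduct_smul, Jmat_eq,
    ← mulVec_mulVec, ← mulVec_mulVec, vecMulVec_mulVec, mulVec_smul]
  simp only [op_smul_eq_smul, smul_eq_mul, dotProduct_smul, hvu]
  ring

/-- `P_i(s) = G_i(s) B_t`. -/
def Pm {p t : ℕ} (i : Fin 2) (s : TrtSeq p t) : Matrix (Fin p) (Fin t) ℝ := Gmat i s * Bmat t

/-- weighted average of `P_i(s)`. -/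
def Nm {p t : ℕ} (w : TrtSeq p t → ℝ) (i : Fin 2) : Matrix (Fin p) (Fin t) ℝ :=
  ∑ s : TrtSeq p t, w s • Pm i s

lemma Chat_eq {p t : ℕ} (S : Matrix (Fin p) (Fin p) ℝ) (s : TrtSeq p t) (i j : Fin 2) :
    Chat S s i j = (Pm i s)ᵀ * Btil S * Pm j s := by
  simp [Chat, Pm, transpose_mul, Bmat_transpose, Matrix.mul_assoc]

lemma CD_eq {p t : ℕ} (n : ℕ) (S : Matrix (Fin p) (Fin p) ℝ) (w : TrtSeq p t → ℝ)
    (i j : Fin 2) : CD n S w i j =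
    (n : ℝ) • (∑ s : TrtSeq p t, w s • Chat S s i j - (Nm w i)ᵀ * Btil S * Nm w j) := by
  simp [CD, ChatD, Nm, Pm, smul_sub]

lemma Chat_transpose {p t : ℕ} {S : Matrix (Fin p) (Fin p) ℝ} (hS : S.PosDef)
    (s : TrtSeq p t) (i j : Fin 2) : (Chat S s i j)ᵀ = Chat S s j i := by
  simp [Chat_eq, transpose_mul, Btil_transpose hS, Matrix.mul_assoc]

lemma CD_transpose {p t : ℕ} (n : ℕ) {S : Matrix (Fin p) (Fin p) ℝ} (hS : S.PosDef)
    (w : TrtSeq p t → ℝ) (i j : Fin 2) : (CD n S w i j)ᵀ = CD n S w j i := by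
  simp [CD_eq, transpose_sum, Chat_transpose hS, transpose_mul, Btil_transpose hS,
    Matrix.mul_assoc]

lemma aux_quad {p t : ℕ} (X : Matrix (Fin p) (Fin p) ℝ) (P Q : Matrix (Fin p) (Fin t) ℝ)
    (l m : Fin t → ℝ) :
    l ⬝ᵥ ((Pᵀ * X * Q) *ᵥ m) = (P *ᵥ l) ⬝ᵥ (X *ᵥ (Q *ᵥ m)) := by
  rw [← mulVec_mulVec, ← mulVec_mulVec, dotProduct_mulVec, vecMul_transpose]

lemma CD_nonneg {p t : ℕ} (n : ℕ) {S : Matrix (Fin p) (Fin p) ℝ} (hS : S.PosDef)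
    (w : TrtSeq p t → ℝ) (hw : IsDesign w) (i : Fin 2) (l : Fin t → ℝ) :
    0 ≤ l ⬝ᵥ (CD n S w i i *ᵥ l) := by
  have key : ∑ s : TrtSeq p t, w s • Chat S s i i - (Nm w i)ᵀ * Btil S * Nm w i
      = ∑ s : TrtSeq p t, w s • ((Pm i s - Nm w i)ᵀ * Btil S * (Pm i s - Nm w i)) := by
    have e : ∀ s : TrtSeq p t, w s • ((Pm i s - Nm w i)ᵀ * Btil S * (Pm i s - Nm w i))
        = w s • Chat S s i i - ((w s • Pm i s)ᵀ * (Btil S * Nm w i))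
          - ((Nm w i)ᵀ * Btil S) * (w s • Pm i s)
          + w s • ((Nm w i)ᵀ * Btil S * Nm w i) := by
      intro s
      rw [Chat_eq, transpose_sub, transpose_smul]
      simp only [Matrix.sub_mul, Matrix.mul_sub, Matrix.smul_mul, Matrix.mul_smul, smul_sub,
        Matrix.mul_assoc]
      abel
    rw [Finset.sum_congr rfl fun s _ => e s]
    rw [Finset.sum_add_distrib, Finset.sum_sub_distrib, Finset.sum_sub_distrib,
      ← Finset.sum_smul, hw.2, ← Matrix.mul_sum, ← Matrix.sum_mul, ← transpose_sum]
    change _ = _ - (Nm w i)ᵀ * (Btil S * Nm w i) - (Nm w i)ᵀ * Btil S * Nm w i + _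
    rw [Matrix.mul_assoc]
    simp
  rw [CD_eq, key, smul_mulVec, dotProduct_smul, sum_mulVec, dotProduct_sum]
  refine mul_nonneg (Nat.cast_nonneg n) (Finset.sum_nonneg fun s _ => ?_)
  rw [smul_mulVec, dotProduct_smul, aux_quad]
  exact mul_nonneg (hw.1 s) (Btil_nonneg hS _)

lemma quad_bdd {t : ℕ} (C : Matrix (Fin t) (Fin t) ℝ) (l : Fin t → ℝ) (h : l ⬝ᵥ l = 1) :
    -∑ i, ∑ j, |C i j| ≤ l ⬝ᵥ (C *ᵥ l) := by
  have hl : ∀ i, |l i| ≤ 1 := by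
    intro i
    have : l i * l i ≤ l ⬝ᵥ l :=
      Finset.single_le_sum (f := fun i => l i * l i) (fun i _ => mul_self_nonneg _)
        (Finset.mem_univ i)
    rw [← sq_le_one_iff_abs_le_one]
    nlinarith
  simp only [dotProduct, mulVec, Finset.mul_sum, ← Finset.sum_neg_distrib]
  refine Finset.sum_le_sum fun i _ => Finset.sum_le_sum fun j _ => ?_
  have : |l i * (C i j * l j)| ≤ |C i j| := by
    rw [abs_mul, abs_mul]
    have := hl i
    have := hl j
    have h1 : |C i j| * |l j| ≤ |C i j| := mul_le_of_le_one_right (abs_nonneg _) (hl j)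
    exact (mul_le_of_le_one_left (by positivity) (hl i)).trans h1
  exact (abs_le.1 this).1.trans' (le_refl _)

lemma exists_unit {t : ℕ} (C : Matrix (Fin t) (Fin t) ℝ) (τ : Fin t → ℝ)
    (h0 : ∑ i, τ i = 0) (hne : τ ≠ 0) :
    ∃ l : Fin t → ℝ, (∑ i, l i) = 0 ∧ l ⬝ᵥ l = 1 ∧
      (τ ⬝ᵥ (C *ᵥ τ)) / (τ ⬝ᵥ τ) = l ⬝ᵥ (C *ᵥ l) := by
  have hpos : 0 < τ ⬝ᵥ τ := by
    have h1 : 0 ≤ τ ⬝ᵥ τ := Finset.sum_nonneg fun i _ => mul_self_nonneg _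
    exact lt_of_le_of_ne h1 (Ne.symm ((dotProduct_self_eq_zero (v := τ)).not.2 hne))
  have hs : (√(τ ⬝ᵥ τ))⁻¹ * (√(τ ⬝ᵥ τ))⁻¹ = (τ ⬝ᵥ τ)⁻¹ := by
    rw [← mul_inv, Real.mul_self_sqrt hpos.le]
  refine ⟨(√(τ ⬝ᵥ τ))⁻¹ • τ, ?_, ?_, ?_⟩
  · simp [← Finset.mul_sum, h0]
  · simp only [dotProduct_smul, smul_dotProduct, smul_eq_mul]
    rw [← mul_assoc, hs, inv_mul_cancel₀ hpos.ne']
  · simp only [mulVec_smul, dotProduct_smul, smul_dotProduct, smul_eq_mul]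
    rw [← mul_assoc, hs, div_eq_inv_mul]

lemma CInfo_quad {p t : ℕ} (n : ℕ) {S : Matrix (Fin p) (Fin p) ℝ} (hS : S.PosDef)
    (w : TrtSeq p t → ℝ) (τ l : Fin t → ℝ) (l0 : ℝ) :
    l ⬝ᵥ (CInfo n S w τ l0 *ᵥ l) = l ⬝ᵥ (CD n S w 0 0 *ᵥ l) + 2 * l0 * l ⬝ᵥ (CD n S w 0 1 *ᵥ l)
      + l0 ^ 2 * l ⬝ᵥ (CD n S w 1 1 *ᵥ l) - (τ ⬝ᵥ (CD n S w 1 1 *ᵥ τ))⁻¹ *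
        (l ⬝ᵥ (CD n S w 0 1 *ᵥ τ) + l0 * l ⬝ᵥ (CD n S w 1 1 *ᵥ τ)) ^ 2 := by
  have hT : ∀ (i j : Fin 2) (u v : Fin t → ℝ),
      u ⬝ᵥ (CD n S w i j *ᵥ v) = v ⬝ᵥ (CD n S w j i *ᵥ u) := by
    intro i j u v
    rw [dotProduct_mulVec, ← mulVec_transpose, CD_transpose n hS, dotProduct_comm]
  rw [CInfo]
  simp only [sub_mulVec, add_mulVec, smul_mulVec, ← mulVec_mulVec, vecMulVec_mulVec,
    dotProduct_add, dotProduct_sub, dotProduct_smul, mulVec_smul, smul_eq_mul,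
    MulOpposite.smul_eq_mul_unop, op_smul_eq_smul]
  rw [hT 1 0 l l, hT 1 0 τ l, hT 1 1 τ l]
  ring

lemma exch_meas {t : ℕ} (i j : Fin t) :
    Measurable (fun τ : Fin t → ℝ => τ i * τ j / (τ ⬝ᵥ τ)) := by
  unfold dotProduct
  fun_prop

lemma exch_int {t : ℕ} (g : Measure (Fin t → ℝ)) [IsProbabilityMeasure g] (i j : Fin t) :
    Integrable (fun τ : Fin t → ℝ => τ i * τ j / (τ ⬝ᵥ τ)) g := by
  refine Integrable.of_bound (exch_meas i j).aestronglyMeasurable 1 (ae_of_all _ fun τ => ?_)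
  have hs : ∀ i, τ i * τ i ≤ τ ⬝ᵥ τ := fun i =>
    Finset.single_le_sum (f := fun i => τ i * τ i) (fun i _ => mul_self_nonneg _)
        (Finset.mem_univ i)
  have h0 : 0 ≤ τ ⬝ᵥ τ := (mul_self_nonneg _).trans (hs i)
  rw [Real.norm_eq_abs, abs_div, abs_of_nonneg h0]
  refine div_le_one_of_le₀ ?_ h0
  rw [abs_le]
  constructor <;> nlinarith [hs i, hs j, sq_nonneg (τ i + τ j), sq_nonneg (τ i - τ j)]

lemma exch_swap {t : ℕ} (g : Measure (Fin t → ℝ)) (hg : IsExchangeablePrior g)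
    (σ : Equiv.Perm (Fin t)) (i j : Fin t) :
    ∫ τ : Fin t → ℝ, τ i * τ j / (τ ⬝ᵥ τ) ∂g =
      ∫ τ : Fin t → ℝ, τ (σ i) * τ (σ j) / (τ ⬝ᵥ τ) ∂g := by
  have hm : Measurable (fun (τ : Fin t → ℝ) i => τ (σ i)) := by fun_prop
  conv_lhs => rw [← hg.2.2 σ]
  rw [integral_map hm.aemeasurable (exch_meas i j).aestronglyMeasurable]
  refine integral_congr_ae (ae_of_all _ fun τ => ?_)
  have : (fun i => τ (σ i)) ⬝ᵥ (fun i => τ (σ i)) = τ ⬝ᵥ τ :=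
    Equiv.sum_comp σ (fun i => τ i * τ i)
  simp only [this]

lemma exch_ae {t : ℕ} (g : Measure (Fin t → ℝ)) (hg : IsExchangeablePrior g) :
    ∀ᵐ τ ∂g, (∑ i, τ i) = 0 ∧ τ ≠ 0 := hg.2.1

lemma exch_int_quad {t : ℕ} (g : Measure (Fin t → ℝ)) (hg : IsExchangeablePrior g)
    (A : Matrix (Fin t) (Fin t) ℝ) :
    Integrable (fun τ : Fin t → ℝ => (τ ⬝ᵥ (A *ᵥ τ)) / (τ ⬝ᵥ τ)) g ∧
    ∫ τ : Fin t → ℝ, (τ ⬝ᵥ (A *ᵥ τ)) / (τ ⬝ᵥ τ) ∂g =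
      ∑ i, ∑ j, A i j * ∫ τ : Fin t → ℝ, τ i * τ j / (τ ⬝ᵥ τ) ∂g := by
  haveI := hg.1
  have e : (fun τ : Fin t → ℝ => (τ ⬝ᵥ (A *ᵥ τ)) / (τ ⬝ᵥ τ)) =
      fun τ => ∑ i, ∑ j, A i j * (τ i * τ j / (τ ⬝ᵥ τ)) := by
    funext τ
    generalize τ ⬝ᵥ τ = r
    simp only [dotProduct, mulVec, Finset.mul_sum, Finset.sum_div]
    refine Finset.sum_congr rfl fun i _ => Finset.sum_congr rfl fun j _ => ?_
    ring
  have hI : ∀ i j, Integrable (fun τ : Fin t → ℝ => A i j * (τ i * τ j / (τ ⬝ᵥ τ))) g :=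
    fun i j => (exch_int g i j).const_mul _
  rw [e]
  refine ⟨integrable_finsetSum _ fun i _ => integrable_finsetSum _ fun j _ => hI i j, ?_⟩
  rw [integral_finsetSum _ fun i _ => integrable_finsetSum _ fun j _ => hI i j]
  refine Finset.sum_congr rfl fun i _ => ?_
  rw [integral_finsetSum _ fun j _ => hI i j]
  exact Finset.sum_congr rfl fun j _ => integral_const_mul _ _

lemma exch_main {t : ℕ} (ht : 3 ≤ t) (g : Measure (Fin t → ℝ)) (hg : IsExchangeablePrior g)
    (A : Matrix (Fin t) (Fin t) ℝ) (hA : ∑ i, ∑ j, A i j = 0) :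
    ∫ τ : Fin t → ℝ, (τ ⬝ᵥ (A *ᵥ τ)) / (τ ⬝ᵥ τ) ∂g = A.trace / ((t : ℝ) - 1) := by
  haveI := hg.1
  rw [(exch_int_quad g hg A).2]
  set M : Fin t → Fin t → ℝ := fun i j => ∫ τ : Fin t → ℝ, τ i * τ j / (τ ⬝ᵥ τ) ∂g with hM
  have ht3 : (3 : ℝ) ≤ t := by exact_mod_cast ht
  have hdiag : ∀ i j, M i i = M j j := by
    intro i j
    have := exch_swap g hg (Equiv.swap i j) i i
    simpa using this
  have hoff : ∀ i j k, j ≠ i → k ≠ i → M i j = M i k := by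
    intro i j k hj hk
    have := exch_swap g hg (Equiv.swap j k) i j
    rwa [Equiv.swap_apply_of_ne_of_ne hj.symm hk.symm, Equiv.swap_apply_left] at this
  have hrow : ∀ i, ∑ j, M i j = 0 := by
    intro i
    simp only [hM]
    rw [← integral_finsetSum _ fun j _ => exch_int g i j]
    rw [integral_eq_zero_of_ae]
    filter_upwards [exch_ae g hg] with τ hτ
    rw [← Finset.sum_div, ← Finset.mul_sum, hτ.1]
    simp
  have htr : ∑ i, M i i = 1 := by
    simp only [hM]
    rw [← integral_finsetSum _ fun j _ => exch_int g j j]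
    rw [integral_congr_ae (g := fun _ => (1 : ℝ))]
    · simp
    filter_upwards [exch_ae g hg] with τ hτ
    rw [← Finset.sum_div]
    exact div_self ((dotProduct_self_eq_zero (v := τ)).not.2 hτ.2)
  have hd : ∀ i, M i i = (t : ℝ)⁻¹ := by
    intro i
    rw [Finset.sum_congr rfl fun j _ => hdiag j i] at htr
    simp only [Finset.sum_const, Finset.card_univ, Fintype.card_fin, nsmul_eq_mul] at htr
    exact eq_inv_of_mul_eq_one_right htr
  have ho : ∀ i j, j ≠ i → M i j = - (t : ℝ)⁻¹ / ((t : ℝ) - 1) := by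
    intro i j hj
    have h := hrow i
    rw [← Finset.add_sum_erase _ _ (Finset.mem_univ i), hd,
      Finset.sum_congr rfl fun k hk => hoff i k j (Finset.ne_of_mem_erase hk) hj] at h
    simp only [Finset.sum_const, Finset.card_erase_of_mem (Finset.mem_univ i), Finset.card_univ,
      Fintype.card_fin, nsmul_eq_mul] at h
    rw [Nat.cast_sub (by omega)] at h
    rw [eq_div_iff (by linarith)]
    push_cast at h
    linarith
  have hMij : ∀ i j, A i j * M i j = (- (t : ℝ)⁻¹ / ((t : ℝ) - 1)) * A i j +
      (if i = j then ((t : ℝ) - 1)⁻¹ * A i j else 0) := by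
    intro i j
    have h1 : (t : ℝ) - 1 ≠ 0 := by linarith
    have h2 : (t : ℝ) ≠ 0 := by linarith
    by_cases h : i = j
    · subst h
      rw [hd, if_pos rfl]
      field_simp
      ring
    · rw [ho i j (Ne.symm h), if_neg h]; ring
  have hrow2 : ∀ i, ∑ j, A i j * M i j = (- (t : ℝ)⁻¹ / ((t : ℝ) - 1)) * ∑ j, A i j +
      ((t : ℝ) - 1)⁻¹ * A i i := by
    intro i
    rw [Finset.sum_congr rfl fun j _ => hMij i j, Finset.sum_add_distrib, Finset.mul_sum]
    simp
  rw [Finset.sum_congr rfl fun i _ => hrow2 i, Finset.sum_add_distrib, ← Finset.mul_sum, hA,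
    ← Finset.mul_sum, mul_zero, zero_add, div_eq_inv_mul]
  rfl

lemma le_yStar {p t : ℕ} (S : Matrix (Fin p) (Fin p) ℝ) (xstar : ℝ)
    (hxs : qMax p t S xstar = yStar p t S) (s : TrtSeq p t) : qSeq S s xstar ≤ yStar p t S := by
  rw [← hxs]
  exact le_csSup (Set.finite_range _).bddAbove ⟨s, rfl⟩

/-- the competitor bound matrix -/
def Amat {p t : ℕ} (n : ℕ) (S : Matrix (Fin p) (Fin p) ℝ) (w : TrtSeq p t → ℝ) (x : ℝ) :
    Matrix (Fin t) (Fin t) ℝ :=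
  (n : ℝ) • ∑ s : TrtSeq p t, w s • (Chat S s 0 0 + x • (Chat S s 0 1 + Chat S s 1 0)
    + x ^ 2 • Chat S s 1 1)

lemma Amat_sum {p t : ℕ} (ht : 0 < t) (n : ℕ) (S : Matrix (Fin p) (Fin p) ℝ)
    (w : TrtSeq p t → ℝ) (x : ℝ) : ∑ i, ∑ j, Amat n S w x i j = 0 := by
  have hC : ∀ (s : TrtSeq p t) i j, Chat S s i j *ᵥ (fun _ => (1 : ℝ)) = 0 := by
    intro s i j
    rw [Chat, ← mulVec_mulVec, Bmat_mulVec_one ht, mulVec_zero]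
  have : Amat n S w x *ᵥ (fun _ => (1 : ℝ)) = 0 := by
    simp [Amat, smul_mulVec, sum_mulVec, add_mulVec, hC]
  refine Finset.sum_eq_zero fun i _ => ?_
  simpa [mulVec, dotProduct] using congrFun this i

lemma Amat_trace {p t : ℕ} (n : ℕ) {S : Matrix (Fin p) (Fin p) ℝ} (hS : S.PosDef)
    (w : TrtSeq p t → ℝ) (x : ℝ) :
    (Amat n S w x).trace = n * ∑ s : TrtSeq p t, w s * qSeq S s x := by
  simp only [Amat, trace_smul, trace_sum, trace_add, smul_eq_mul]
  congr 1
  refine Finset.sum_congr rfl fun s _ => ?_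
  have : (Chat S s 1 0).trace = (Chat S s 0 1).trace := by
    rw [← Chat_transpose hS, trace_transpose]
  rw [this, qSeq]
  simp only [cseq]
  ring

lemma Amat_ge {p t : ℕ} (n : ℕ) {S : Matrix (Fin p) (Fin p) ℝ} (hS : S.PosDef)
    (w : TrtSeq p t → ℝ) (x : ℝ) (l : Fin t → ℝ) :
    l ⬝ᵥ (CD n S w 0 0 *ᵥ l) + 2 * x * l ⬝ᵥ (CD n S w 0 1 *ᵥ l)
      + x ^ 2 * l ⬝ᵥ (CD n S w 1 1 *ᵥ l) ≤ l ⬝ᵥ (Amat n S w x *ᵥ l) := by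
  have e : Amat n S w x = CD n S w 0 0 + x • (CD n S w 0 1 + CD n S w 1 0)
      + x ^ 2 • CD n S w 1 1
      + (n : ℝ) • ((Nm w 0 + x • Nm w 1)ᵀ * Btil S * (Nm w 0 + x • Nm w 1)) := by
    have : Amat n S w x = (n : ℝ) • (∑ s : TrtSeq p t, w s • Chat S s 0 0 +
        x • (∑ s : TrtSeq p t, w s • Chat S s 0 1 + ∑ s : TrtSeq p t, w s • Chat S s 1 0) +
        x ^ 2 • ∑ s : TrtSeq p t, w s • Chat S s 1 1) := by
      simp only [Amat, smul_add, Finset.sum_add_distrib, Finset.smul_sum, smul_comm x (w _),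
        smul_comm (x ^ 2) (w _)]
    rw [this]
    simp only [CD_eq, transpose_add, transpose_smul, Matrix.add_mul, Matrix.mul_add,
      Matrix.smul_mul, Matrix.mul_smul]
    module
  have hT : l ⬝ᵥ (CD n S w 1 0 *ᵥ l) = l ⬝ᵥ (CD n S w 0 1 *ᵥ l) := by
    rw [dotProduct_mulVec, ← mulVec_transpose, CD_transpose n hS, dotProduct_comm]
  have hb : 0 ≤ (n : ℝ) * l ⬝ᵥ (((Nm w 0 + x • Nm w 1)ᵀ * Btil S *
      (Nm w 0 + x • Nm w 1)) *ᵥ l) := by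
    rw [aux_quad]
    exact mul_nonneg (Nat.cast_nonneg n) (Btil_nonneg hS _)
  rw [e]
  simp only [add_mulVec, smul_mulVec, dotProduct_add, dotProduct_smul, smul_eq_mul] at hb ⊢
  rw [hT]
  linarith

lemma mD_le {p t : ℕ} (n : ℕ) {S : Matrix (Fin p) (Fin p) ℝ} (hS : S.PosDef)
    (w : TrtSeq p t → ℝ) (x l0 : ℝ) (τ : Fin t → ℝ) (h0 : ∑ i, τ i = 0) (hne : τ ≠ 0)
    (hr : 0 < τ ⬝ᵥ (CD n S w 1 1 *ᵥ τ)) :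
    mD n S w l0 τ ≤ (τ ⬝ᵥ (Amat n S w x *ᵥ τ)) / (τ ⬝ᵥ τ) := by
  obtain ⟨l, hl0, hl1, hl⟩ := exists_unit (CInfo n S w τ l0) τ h0 hne
  have h1 : mD n S w l0 τ ≤ (τ ⬝ᵥ (CInfo n S w τ l0 *ᵥ τ)) / (τ ⬝ᵥ τ) := by
    refine csInf_le ⟨-∑ i, ∑ j, |CInfo n S w τ l0 i j|, ?_⟩ ⟨l, hl0, hl1, hl⟩
    rintro v ⟨l, -, hl1, rfl⟩
    exact quad_bdd _ _ hl1
  refine h1.trans (div_le_div_of_nonneg_right ?_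
    (Finset.sum_nonneg fun i _ => mul_self_nonneg _))
  refine le_trans ?_ (Amat_ge n hS w x τ)
  rw [CInfo_quad n hS]
  generalize τ ⬝ᵥ (CD n S w 1 1 *ᵥ τ) = r at *
  generalize τ ⬝ᵥ (CD n S w 0 1 *ᵥ τ) = b at *
  generalize τ ⬝ᵥ (CD n S w 0 0 *ᵥ τ) = a at *
  have : a + 2 * x * b + x ^ 2 * r - (a + 2 * l0 * b + l0 ^ 2 * r - r⁻¹ * (b + l0 * r) ^ 2)
      = r⁻¹ * (b + x * r) ^ 2 := by
    field_simp
    ring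
  have h2 : 0 ≤ r⁻¹ * (b + x * r) ^ 2 := by positivity
  linarith

lemma Ecrit_le {p t : ℕ} (ht : 3 ≤ t) (n : ℕ) {S : Matrix (Fin p) (Fin p) ℝ} (hS : S.PosDef)
    (xstar : ℝ) (hxs : qMax p t S xstar = yStar p t S)
    (g : Measure (Fin t → ℝ)) (hg : IsExchangeablePrior g) (l0 : ℝ) (w : TrtSeq p t → ℝ)
    (hw : EAdmissible n S g l0 w) :
    Ecrit n S g l0 w ≤ n * (yStar p t S / ((t : ℝ) - 1)) := by
  have ht3 : (3 : ℝ) ≤ t := by exact_mod_cast ht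
  have h1 : Ecrit n S g l0 w ≤
      ∫ τ : Fin t → ℝ, (τ ⬝ᵥ (Amat n S w xstar *ᵥ τ)) / (τ ⬝ᵥ τ) ∂g := by
    refine integral_mono_ae hw.2.2 (exch_int_quad g hg _).1 ?_
    filter_upwards [exch_ae g hg, hw.2.1] with τ hτ hr
    exact mD_le n hS w xstar l0 τ hτ.1 hτ.2 hr
  rw [exch_main ht g hg _ (Amat_sum (by omega) n S w xstar), Amat_trace n hS] at h1
  refine h1.trans ?_
  rw [mul_div_assoc]
  refine mul_le_mul_of_nonneg_left (div_le_div_of_nonneg_right ?_ (by linarith))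
    (Nat.cast_nonneg n)
  calc ∑ s, w s * qSeq S s xstar ≤ ∑ s, w s * yStar p t S :=
        Finset.sum_le_sum fun s _ => mul_le_mul_of_nonneg_left (le_yStar S xstar hxs s) (hw.1.1 s)
    _ = yStar p t S := by rw [← Finset.sum_mul, hw.1.2, one_mul]

lemma mD_eq {p t : ℕ} (n : ℕ) {S : Matrix (Fin p) (Fin p) ℝ} (hS : S.PosDef)
    (w : TrtSeq p t → ℝ) (hw : IsDesign w) (x c l0 : ℝ)
    (h1 : CD n S w 0 0 + x • CD n S w 0 1 = c • Bmat t)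
    (h2 : CD n S w 1 0 + x • CD n S w 1 1 = 0)
    (τ : Fin t → ℝ) (h0 : ∑ i, τ i = 0) (hne : τ ≠ 0) : mD n S w l0 τ = c := by
  have e01 : CD n S w 0 1 = (-x) • CD n S w 1 1 := by
    have := congrArg transpose h2
    simp only [transpose_add, transpose_smul, CD_transpose n hS, transpose_zero] at this
    rw [neg_smul]
    exact eq_neg_of_add_eq_zero_left this
  have e00 : CD n S w 0 0 = c • Bmat t + x ^ 2 • CD n S w 1 1 := by
    rw [← h1, e01]; module
  have hq : ∀ l : Fin t → ℝ, (∑ i, l i) = 0 → l ⬝ᵥ (CInfo n S w τ l0 *ᵥ l) = c * (l ⬝ᵥ l) +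
      (l0 - x) ^ 2 * (l ⬝ᵥ (CD n S w 1 1 *ᵥ l) -
        (τ ⬝ᵥ (CD n S w 1 1 *ᵥ τ))⁻¹ * (τ ⬝ᵥ (CD n S w 1 1 *ᵥ l)) ^ 2) := by
    intro l hl
    have hT : τ ⬝ᵥ (CD n S w 1 1 *ᵥ l) = l ⬝ᵥ (CD n S w 1 1 *ᵥ τ) := by
      rw [dotProduct_mulVec, ← mulVec_transpose, CD_transpose n hS, dotProduct_comm]
    rw [CInfo_quad n hS, hT, e00, e01]
    simp only [add_mulVec, smul_mulVec, dotProduct_add, dotProduct_smul, smul_eq_mul,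
      Bmat_mulVec l hl]
    ring
  refine IsLeast.csInf_eq ⟨?_, ?_⟩
  · obtain ⟨l, hl0, hl1, hl⟩ := exists_unit (CInfo n S w τ l0) τ h0 hne
    refine ⟨l, hl0, hl1, ?_⟩
    rw [← hl, hq τ h0]
    have hτ : τ ⬝ᵥ τ ≠ 0 := (dotProduct_self_eq_zero (v := τ)).not.2 hne
    rw [eq_div_iff hτ]
    by_cases hr : τ ⬝ᵥ (CD n S w 1 1 *ᵥ τ) = 0
    · rw [hr]; simp
    · field_simp
      ring
  · rintro v ⟨l, hl0, hl1, rfl⟩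
    rw [hq l hl0, hl1, mul_one]
    have := aux_cs (CD n S w 1 1) (CD_transpose n hS w 1 1) (CD_nonneg n hS w hw 1) τ l
    nlinarith [mul_nonneg (sq_nonneg (l0 - x)) this]

lemma CD_comb {p t : ℕ} (n : ℕ) (S : Matrix (Fin p) (Fin p) ℝ)
    (w : TrtSeq p t → ℝ) (x : ℝ) (i : Fin 2)
    (h3 : ∑ s : TrtSeq p t, w s • (Btil S * (Tmat s + x • Fmat s) * Bmat t) = 0) :
    CD n S w i 0 + x • CD n S w i 1 =
      (n : ℝ) • ∑ s : TrtSeq p t, w s • (Chat S s i 0 + x • Chat S s i 1) := by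
  have h3' : Btil S * (Nm w 0 + x • Nm w 1) = 0 := by
    rw [← h3, Nm, Nm, Finset.smul_sum, ← Finset.sum_add_distrib, Matrix.mul_sum]
    refine Finset.sum_congr rfl fun s _ => ?_
    simp only [Pm, Gmat, Matrix.mul_add, Matrix.add_mul, Matrix.mul_smul, Matrix.smul_mul,
      Matrix.mul_assoc, smul_add]
    simp [smul_comm x (w s)]
  have e : CD n S w i 0 + x • CD n S w i 1 =
      (n : ℝ) • ((∑ s : TrtSeq p t, w s • Chat S s i 0 + x • ∑ s : TrtSeq p t, w s • Chat S s i 1)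
        - (Nm w i)ᵀ * (Btil S * (Nm w 0 + x • Nm w 1))) := by
    simp only [CD_eq, Matrix.mul_add, Matrix.mul_smul, Matrix.mul_assoc]
    module
  rw [e, h3', Matrix.mul_zero, sub_zero]
  simp only [smul_add, Finset.sum_add_distrib, Finset.smul_sum, smul_comm x (w _)]



/-- the five conditions (for some real `x`) imply `E_{g,λ0}`-optimality
for every `λ0` and every exchangeable prior `g`. -/
theorem stmt8 (p t n : ℕ) (hp : 2 ≤ p) (ht : 3 ≤ t) (hn : 1 ≤ n)
    (S : Matrix (Fin p) (Fin p) ℝ) (hS : S.PosDef)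
    (xstar : ℝ) (hxs : qMax p t S xstar = yStar p t S)
    (hxsu : ∀ x : ℝ, qMax p t S x = yStar p t S → x = xstar)
    (w : TrtSeq p t → ℝ) (hw : IsDesign w) (x : ℝ)
    (h1 : ∑ s ∈ Finset.univ.filter (fun s : TrtSeq p t => qSeq S s xstar = yStar p t S),
        w s • (Chat S s 0 0 + x • Chat S s 0 1) = (yStar p t S / ((t : ℝ) - 1)) • Bmat t)
    (h2 : ∑ s ∈ Finset.univ.filter (fun s : TrtSeq p t => qSeq S s xstar = yStar p t S),
        w s • (Chat S s 1 0 + x • Chat S s 1 1) = 0)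
    (h3 : ∑ s ∈ Finset.univ.filter (fun s : TrtSeq p t => qSeq S s xstar = yStar p t S),
        w s • (Btil S * (Tmat s + x • Fmat s) * Bmat t) = 0)
    (h4 : ∑ s ∈ Finset.univ.filter (fun s : TrtSeq p t => qSeq S s xstar = yStar p t S),
        w s = 1)
    (h5 : ∀ s : TrtSeq p t, qSeq S s xstar ≠ yStar p t S → w s = 0) :
    ∀ (l0 : ℝ) (g : Measure (Fin t → ℝ)), IsExchangeablePrior g →
      EOptimal n S g l0 w := by
  intro l0 g hg w' hw'
  have hsum : ∀ {m k : ℕ} (f : TrtSeq p t → Matrix (Fin m) (Fin k) ℝ),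
      ∑ s ∈ Finset.univ.filter (fun s : TrtSeq p t => qSeq S s xstar = yStar p t S), w s • f s
        = ∑ s : TrtSeq p t, w s • f s := by
    intro m k f
    refine Finset.sum_subset (Finset.filter_subset _ _) fun s _ hs => ?_
    rw [h5 s (by simpa using hs), zero_smul]
  rw [hsum] at h1 h2 h3
  have k1 := CD_comb n S w x 0 h3
  have k2 := CD_comb n S w x 1 h3
  rw [h1, smul_smul] at k1
  rw [h2, smul_zero] at k2
  refine (Ecrit_le ht n hS xstar hxs g hg l0 w' hw').trans (le_of_eq ?_)
  haveI := hg.1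
  rw [Ecrit, integral_congr_ae (g := fun _ => (n : ℝ) * (yStar p t S / ((t : ℝ) - 1)))]
  · simp
  filter_upwards [exch_ae g hg] with τ hτ
  exact mD_eq n hS w hw x _ l0 k1 k2 τ hτ.1 hτ.2
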